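/- Let Γ be a group and let ρ₁, ρ₂ : Γ → PSL(2,ℝ) be group homomorphisms such that ρ₁(Γ) is non-elementary and |tr(ρ₁(γ))| = |tr(ρ₂(γ))| for every γ ∈ Γ. Then there exists a matrix g ∈ GL(2,ℝ) such that, for every γ ∈ Γ, conjugating a representative matrix of ρ₁(γ) by g yields, up to sign and up to a positive scalar, a representative matrix of ρ₂(γ); that is, ρ₁ and ρ₂ are conjugate by an element of PGL(2,ℝ), equivalently by an isometry (possibly orientation-reversing) of the hyperbolic plane ℍ². -/

import Mathlib

/-!
`PSL2R` is `PSL(2,ℝ) = SL(2,ℝ)/{±1}`, realized as the quotient of `SL(2,ℝ)` by its center.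
-/

open Matrix Real

noncomputable section

/-- `SL(2,ℝ)`. -/
abbrev SL2R := Matrix.SpecialLinearGroup (Fin 2) ℝ

/-- The topology on `SL(2,ℝ)` induced from the space of matrices. -/
instance : TopologicalSpace SL2R :=
  TopologicalSpace.induced (fun g => (g : Matrix (Fin 2) (Fin 2) ℝ)) inferInstance

/-- `PSL(2,ℝ) = SL(2,ℝ)/{±1}`, the quotient of `SL(2,ℝ)` by its center. -/
abbrev PSL2R := SL2R ⧸ Subgroup.center SL2R

/-- The rotation matrix `R(θ) = [[cos θ, sin θ], [-sin θ, cos θ]]`, as an element of `SL(2,ℝ)`. -/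
def rotMat (θ : ℝ) : SL2R :=
  ⟨!![Real.cos θ, Real.sin θ; -Real.sin θ, Real.cos θ], by
    simp [Matrix.det_fin_two_of]
    ring_nf
    nlinarith [Real.sin_sq_add_cos_sq θ]⟩

/-- The absolute value of the trace, well defined on `PSL(2,ℝ)`. -/
def absTrace (A : PSL2R) : ℝ :=
  |Matrix.trace ((Quotient.out A : SL2R) : Matrix (Fin 2) (Fin 2) ℝ)|

/-- An element of `PSL(2,ℝ)` is elliptic if `|tr| < 2`. -/
def IsElliptic (A : PSL2R) : Prop := absTrace A < 2

/-- The rotation number of an element of `PSL(2,ℝ)`, in `ℝ/2πℤ`: it is `2θ` if the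
element is conjugate to the class of `R(θ)` with `θ ∈ (0,π)` (i.e. elliptic), and `0`
otherwise (hyperbolic, parabolic, identity). -/
def rot (A : PSL2R) : AddCircle (2 * π) :=
  open Classical in
  if h : ∃ θ ∈ Set.Ioo (0:ℝ) π, IsConj (QuotientGroup.mk (rotMat θ) : PSL2R) A then
    ((2 * h.choose : ℝ) : AddCircle (2 * π))
  else 0

/-- A subgroup of `PSL(2,ℝ)` is discrete if it is a discrete subset of the
topological group `PSL(2,ℝ)`. -/
def IsDiscreteSubgroup (G : Subgroup PSL2R) : Prop := DiscreteTopology G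

/-- The boundary circle `∂ℍ² = ℝ ∪ {∞}`, realized as the real projective line. -/
def Boundary := Projectivization ℝ (Fin 2 → ℝ)

/-- An element of `SL(2,ℝ)`, viewed as an invertible matrix. -/
def slInvertible (g : SL2R) : Invertible (g : Matrix (Fin 2) (Fin 2) ℝ) :=
  haveI : Invertible (g : Matrix (Fin 2) (Fin 2) ℝ).det := by rw [g.prop]; exact invertibleOne
  Matrix.invertibleOfDetInvertible _

/-- The (Möbius) action of `SL(2,ℝ)` on the boundary circle `∂ℍ² = ℝP¹`. -/
def boundaryAct (g : SL2R) (p : Boundary) : Boundary :=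
  Projectivization.map
    ((Matrix.toLinearEquiv' (g : Matrix (Fin 2) (Fin 2) ℝ) (slInvertible g)) :
      (Fin 2 → ℝ) →ₗ[ℝ] (Fin 2 → ℝ))
    (Matrix.toLinearEquiv' (g : Matrix (Fin 2) (Fin 2) ℝ) (slInvertible g)).injective p

/-- A subgroup of `PSL(2,ℝ)` is elementary if it has a finite orbit in `ℍ² ∪ ∂ℍ²`:
either the orbit of some point of the hyperbolic plane `ℍ²` is finite, or the orbit of some
point of the boundary circle `∂ℍ²` is finite. (The action of a class in `PSL(2,ℝ)` is
computed via representatives in `SL(2,ℝ)`; the center acts trivially.) -/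
def IsElementary (G : Subgroup PSL2R) : Prop :=
  (∃ z : UpperHalfPlane,
    Set.Finite {w : UpperHalfPlane | ∃ g : SL2R, (QuotientGroup.mk g : PSL2R) ∈ G ∧ g • z = w}) ∨
  (∃ p : Boundary,
    Set.Finite {q : Boundary | ∃ g : SL2R, (QuotientGroup.mk g : PSL2R) ∈ G ∧ boundaryAct g p = q})

end

/-!
The matrix `u(x) = tr(A) A` is the same for both representatives `±A` of `x ∈ PSL(2,ℝ)`, and the
traces of the products `u(x) u(y)` and `u(x) u(y) u(z)` are polynomials in the squared traces of
words in `x`, `y`, `z`. Hence `u ∘ ρ₁` and `u ∘ ρ₂` have equal double and triple traces.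

The span of `u(ρ₁(Γ))` is stable under conjugation by `ρ₁(Γ)`. If it were proper, then `ρ₁(Γ)` would
have exponent two or would normalize the algebra `ℝ[X]` of a non-scalar matrix `X`, hence permute
the fixed points of `X` in `ℍ² ∪ ∂ℍ²`; in both cases it would be elementary. So `u ∘ ρ₁` spans
`M₂(ℝ)`. As the trace form is nondegenerate, the double traces give a linear isometry of `M₂(ℝ)`
taking `u ∘ ρ₁` to `u ∘ ρ₂`, which is an algebra automorphism by the triple traces, hence
conjugation by some `g` by the Skolem–Noether theorem. Both `g A` and `B g`, for representatives
`A` of `ρ₁(γ)` and `B` of `ρ₂(γ)`, then intertwine `u ∘ ρ₁` with the same family, hence agree up to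
a scalar, which the determinant forces to be `±1`.
-/

/-! ### Matrix families with equal traces -/

section TraceForm

variable {K ι : Type*} [Field K]

theorem exists_isometry_apply_eq_of_gram_eq {V : Type*} [AddCommGroup V] [Module K V]
    [FiniteDimensional K V] {B : LinearMap.BilinForm K V} (hB : B.Nondegenerate) {u v : ι → V}
    (hu : Submodule.span K (Set.range u) = ⊤) (huv : ∀ i j, B (u i) (u j) = B (v i) (v j)) :
    ∃ φ : V ≃ₗ[K] V, (∀ i, φ (u i) = v i) ∧ ∀ x y, B (φ x) (φ y) = B x y := by
  let p := Finsupp.linearCombination K u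
  let q := Finsupp.linearCombination K v
  have hqp (a b) : B (q a) (q b) = B (p a) (p b) := by
    have : B.compl₁₂ q q = B.compl₁₂ p p := by
      ext i j
      simp [p, q, huv]
    exact LinearMap.congr_fun₂ this a b
  obtain ⟨s, hs⟩ := p.exists_rightInverse_of_surjective
    (by rw [Finsupp.range_linearCombination, hu])
  replace hs (x) : p (s x) = x := LinearMap.congr_fun hs x
  have hisom (x y) : B (q (s x)) (q (s y)) = B x y := by rw [hqp, hs, hs]
  have hinj : Function.Injective (q ∘ₗ s) := by
    refine (injective_iff_map_eq_zero _).mpr fun x hx => hB.1 x fun y => ?_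
    rw [← hisom, show q (s x) = 0 from hx, map_zero, LinearMap.zero_apply]
  let φ := LinearEquiv.ofInjectiveEndo (q ∘ₗ s) hinj
  refine ⟨φ, fun i => sub_eq_zero.mp (hB.1 _ fun y => ?_), hisom⟩
  obtain ⟨x, rfl⟩ := φ.surjective y
  have hv : B (v i) (φ x) = B (u i) x := by
    have := hqp (Finsupp.single i 1) (s x)
    rwa [hs, Finsupp.linearCombination_single, Finsupp.linearCombination_single, one_smul,
      one_smul] at this
  rw [map_sub, LinearMap.sub_apply, hv]
  exact sub_eq_zero.mpr (hisom _ _)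

theorem nondegenerate_trace_mul {n R : Type*} [Fintype n] [CommRing R] :
    ((LinearMap.mul R (Matrix n n R)).compr₂ (traceLinearMap n R R)).Nondegenerate :=
  ⟨fun X hX => ext_iff_trace_mul_right.mpr fun Y => by simpa using hX Y,
    fun X hX => ext_iff_trace_mul_left.mpr fun Y => by simpa using hX Y⟩

variable {n : Type*} [Fintype n] [DecidableEq n]

theorem exists_GL_mul_eq_mul_of_algEquiv (f : Matrix n n K ≃ₐ[K] Matrix n n K) :
    ∃ g : GL n K, ∀ X, g.val * X = f X * g.val := by
  let e : Matrix n n K ≃ₐ[K] Module.End K (n → K) := toLinAlgEquiv'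
  obtain ⟨T, hT⟩ := ((e.symm.trans f).trans e).eq_linearEquivConjAlgEquiv
  let g := LinearMap.GeneralLinearGroup.ofLinearEquiv T
  refine ⟨Units.map e.symm.toMonoidHom g, fun X => e.injective ?_⟩
  have hX : e (f X) = T.conjAlgEquiv K (e X) := by simpa using AlgEquiv.congr_fun hT (e X)
  ext v
  simp [hX, g]

theorem exists_GL_mul_eq_mul_of_trace_eq {u v : ι → Matrix n n K}
    (hu : Submodule.span K (Set.range u) = ⊤)
    (h₂ : ∀ i j, trace (u i * u j) = trace (v i * v j))
    (h₃ : ∀ i j k, trace (u i * u j * u k) = trace (v i * v j * v k)) :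
    ∃ g : GL n K, ∀ i, g.val * u i = v i * g.val := by
  obtain ⟨φ, hφ, hisom⟩ :=
    exists_isometry_apply_eq_of_gram_eq nondegenerate_trace_mul hu (by simpa using h₂)
  replace hisom (X Y) : trace (φ X * φ Y) = trace (X * Y) := hisom X Y
  have hmul_gen (i j) : φ (u i * u j) = v i * v j := by
    have htrace : traceLinearMap n K K ∘ₗ LinearMap.mulLeft K (u i * u j) =
        traceLinearMap n K K ∘ₗ LinearMap.mulLeft K (v i * v j) ∘ₗ φ.toLinearMap :=
      LinearMap.ext_on_range hu fun k => by simpa [hφ, mul_assoc] using h₃ i j k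
    refine ext_iff_trace_mul_right.mpr fun Y => ?_
    obtain ⟨Z, rfl⟩ := φ.surjective Y
    exact (hisom _ _).trans (LinearMap.congr_fun htrace Z)
  have hmul : (LinearMap.mul K (Matrix n n K)).compr₂ φ.toLinearMap =
      (LinearMap.mul K (Matrix n n K)).compl₁₂ φ.toLinearMap φ.toLinearMap :=
    LinearMap.ext_on_range hu fun i => LinearMap.ext_on_range hu fun j => by simp [hφ, hmul_gen]
  replace hmul (X Y) : φ (X * Y) = φ X * φ Y := LinearMap.congr_fun₂ hmul X Y
  have hone : φ 1 = 1 := by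
    obtain ⟨X, hX⟩ := φ.surjective 1
    calc φ 1 = φ 1 * φ X := by rw [hX, mul_one]
      _ = 1 := by rw [← hmul, one_mul, hX]
  obtain ⟨g, hg⟩ := exists_GL_mul_eq_mul_of_algEquiv (AlgEquiv.ofLinearEquiv φ hone hmul)
  exact ⟨g, fun i => (hg (u i)).trans (by simp [hφ])⟩

end TraceForm

/-! ### Traces of representatives -/

open scoped MatrixGroups

section TwoByTwo

variable {R : Type*} [CommRing R]

theorem trace_mul_inv_eq_sub (A B : SL(2, R)) :
    trace (A * B⁻¹).val = trace A.val * trace B.val - trace (A * B).val := by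
  rw [Matrix.SpecialLinearGroup.coe_mul, Matrix.SpecialLinearGroup.coe_mul,
    Matrix.SpecialLinearGroup.coe_inv, adjugate_fin_two]
  simp only [trace_fin_two, Matrix.mul_apply, Fin.sum_univ_two, of_apply, cons_val_zero,
    cons_val_one, cons_val_fin_one]
  ring

theorem trace_mul_mul_add_trace_mul_mul (A B C : Matrix (Fin 2) (Fin 2) R) :
    trace (A * B * C) + trace (C * B * A) =
      trace A * trace (B * C) + trace B * trace (A * C) + trace C * trace (A * B) -
        trace A * trace B * trace C := by
  simp only [trace_fin_two, Matrix.mul_apply, Fin.sum_univ_two]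
  ring

theorem mem_center_SL2_iff [IsDomain R] {A : SL(2, R)} :
    A ∈ Subgroup.center SL(2, R) ↔ A = 1 ∨ A = -1 := by
  rw [Matrix.SpecialLinearGroup.mem_center_iff, Fintype.card_fin]
  constructor
  · rintro ⟨r, hr, hA⟩
    rcases sq_eq_one_iff.mp hr with rfl | rfl
    · exact .inl (Subtype.ext (by rw [← hA, map_one]; rfl))
    · exact .inr (Subtype.ext (by rw [← hA, map_neg, map_one]; rfl))
  · rintro (rfl | rfl)
    · exact ⟨1, one_pow 2, map_one _⟩
    · exact ⟨-1, neg_one_sq, by rw [map_neg, map_one]; rfl⟩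

end TwoByTwo

namespace PSL2R

theorem mk_eq_mk_iff {A B : SL2R} :
    (QuotientGroup.mk A : PSL2R) = QuotientGroup.mk B ↔ B = A ∨ B = -A := by
  rw [QuotientGroup.eq, mem_center_SL2_iff, inv_mul_eq_iff_eq_mul, inv_mul_eq_iff_eq_mul, mul_one,
    mul_neg_one]

theorem absTrace_mk (A : SL2R) : absTrace (QuotientGroup.mk A) = |trace A.val| := by
  rcases mk_eq_mk_iff.mp (QuotientGroup.out_eq' (QuotientGroup.mk A : PSL2R)).symm with h | h <;>
    simp [absTrace, h]

/-- The matrix `tr(A) A` of the class of `A`. It does not change when `A` is replaced by `-A`, so it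
lifts elements of `PSL(2,ℝ)` to matrices without a choice of sign; it is computed on an arbitrary
representative, see `traceSMul_mk`. -/
noncomputable def traceSMul (x : PSL2R) : Matrix (Fin 2) (Fin 2) ℝ :=
  trace (Quotient.out x : SL2R).val • (Quotient.out x : SL2R).val

theorem traceSMul_mk (A : SL2R) : traceSMul (QuotientGroup.mk A) = trace A.val • A.val := by
  rcases mk_eq_mk_iff.mp (QuotientGroup.out_eq' (QuotientGroup.mk A : PSL2R)).symm with h | h <;>
    simp [traceSMul, h]

theorem two_mul_trace_traceSMul_mul (x y : PSL2R) :
    2 * trace (traceSMul x * traceSMul y) =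
      absTrace x ^ 2 * absTrace y ^ 2 + absTrace (x * y) ^ 2 - absTrace (x * y⁻¹) ^ 2 := by
  obtain ⟨A, rfl⟩ := QuotientGroup.mk_surjective x
  obtain ⟨B, rfl⟩ := QuotientGroup.mk_surjective y
  simp only [← QuotientGroup.mk_mul, ← QuotientGroup.mk_inv, absTrace_mk, sq_abs, traceSMul_mk,
    trace_mul_inv_eq_sub]
  simp only [smul_mul_smul_comm, trace_smul, smul_eq_mul, Matrix.SpecialLinearGroup.coe_mul]
  ring

/-- Write `s = tr(ABC)` and `t = tr(CBA)`. The eight squared traces of words in three letters add up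
to `2 tr(A) tr(B) tr(C) (s - t)`, and the other terms to `2 tr(A) tr(B) tr(C) (s + t)`. -/
theorem four_mul_trace_traceSMul_mul_mul (x y z : PSL2R) :
    4 * trace (traceSMul x * traceSMul y * traceSMul z) =
      absTrace (x * y * z) ^ 2 - absTrace (z * y * x) ^ 2
        - absTrace (y * z * x⁻¹) ^ 2 - absTrace (z * x * y⁻¹) ^ 2 - absTrace (x * y * z⁻¹) ^ 2
        + absTrace (z * y * x⁻¹) ^ 2 + absTrace (x * z * y⁻¹) ^ 2 + absTrace (y * x * z⁻¹) ^ 2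
        + 2 * absTrace x ^ 2 * trace (traceSMul y * traceSMul z)
        + 2 * absTrace y ^ 2 * trace (traceSMul x * traceSMul z)
        + 2 * absTrace z ^ 2 * trace (traceSMul x * traceSMul y)
        - 2 * absTrace x ^ 2 * absTrace y ^ 2 * absTrace z ^ 2 := by
  obtain ⟨A, rfl⟩ := QuotientGroup.mk_surjective x
  obtain ⟨B, rfl⟩ := QuotientGroup.mk_surjective y
  obtain ⟨C, rfl⟩ := QuotientGroup.mk_surjective z
  simp only [← QuotientGroup.mk_mul, ← QuotientGroup.mk_inv, absTrace_mk, sq_abs, traceSMul_mk,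
    trace_mul_inv_eq_sub]
  simp only [smul_mul_smul_comm, trace_smul, smul_eq_mul, Matrix.SpecialLinearGroup.coe_mul]
  rw [trace_mul_cycle B.val C.val A.val, ← trace_mul_cycle A.val B.val C.val,
    trace_mul_cycle B.val A.val C.val, ← trace_mul_cycle C.val B.val A.val,
    trace_mul_comm C.val B.val, trace_mul_comm C.val A.val, trace_mul_comm B.val A.val]
  linear_combination 2 * (trace (A.val * B.val * C.val) - trace (C.val * B.val * A.val) +
    trace A.val * trace B.val * trace C.val) * trace_mul_mul_add_trace_mul_mul A.val B.val C.val

end PSL2R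

/-! ### Subgroups normalizing a quadratic algebra -/

section Eigenlines

open Module

variable {K V : Type*} [Field K] [AddCommGroup V] [Module K V]

theorem finite_setOf_submodule_le_eigenspace (hV : finrank K V = 2) {f : End K V}
    (hf : f ∉ Set.range (algebraMap K (End K V))) :
    {p : Projectivization K V | ∃ μ, p.submodule ≤ f.eigenspace μ}.Finite := by
  have : FiniteDimensional K V := .of_finrank_pos (by lia)
  have hlt (μ : K) : finrank K (f.eigenspace μ) < 2 := by
    refine hV ▸ Submodule.finrank_lt fun htop => hf ⟨μ, ?_⟩
    ext v
    exact (End.mem_eigenspace_iff.mp (htop ▸ Submodule.mem_top : v ∈ f.eigenspace μ)).symm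
  refine ((f.finite_hasEigenvalue.image f.eigenspace).preimage
    Projectivization.submodule_injective.injOn).subset fun p ⟨μ, hp⟩ => ?_
  have hpμ : p.submodule = f.eigenspace μ :=
    Submodule.eq_of_le_of_finrank_le hp (by have := hlt μ; rw [p.finrank_submodule]; lia)
  refine ⟨μ, fun hbot => ?_, hpμ.symm⟩
  have := p.finrank_submodule
  rw [hpμ, show f.eigenspace μ = ⊥ from hbot, finrank_bot] at this
  lia

end Eigenlines

theorem exists_mulVec_eq_smul_of_discr_nonneg {X : Matrix (Fin 2) (Fin 2) ℝ} (hX : 0 ≤ X.discr) :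
    ∃ μ : ℝ, ∃ v ≠ 0, X *ᵥ v = μ • v := by
  let μ := (trace X + √X.discr) / 2
  have hdet : det (X - scalar (Fin 2) μ) = 0 := by
    have hsq : √X.discr ^ 2 = trace X ^ 2 - 4 * det X := by rw [sq_sqrt hX, discr_fin_two]
    have hμ : det (X - scalar (Fin 2) μ) = μ ^ 2 - trace X * μ + det X := by
      simp only [scalar_apply, det_fin_two, Matrix.sub_apply, diagonal_apply_eq, ne_eq,
        zero_ne_one, one_ne_zero, not_false_eq_true, diagonal_apply_ne, sub_zero, trace_fin_two]
      ring
    rw [hμ]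
    linear_combination hsq / 4
  obtain ⟨v, hv, hXv⟩ := exists_mulVec_eq_zero_iff.mpr hdet
  refine ⟨μ, v, hv, ?_⟩
  rwa [sub_mulVec, sub_eq_zero, scalar_apply, ← smul_one_eq_diagonal, smul_mulVec,
    one_mulVec] at hXv

theorem smul_fixedPt_eq_of_mul_eq {X g : GL (Fin 2) ℝ} (hpos : 0 < X.val.det) (hell : X.IsElliptic)
    {l m : ℝ} (h : X.val * g.val = g.val * (l • X.val + m • 1)) :
    g • UpperHalfPlane.fixedPt X hell = UpperHalfPlane.fixedPt X hell := by
  set τ := UpperHalfPlane.fixedPt X hell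
  have hX : X • τ = τ := (UpperHalfPlane.gl_smul_eq_self_iff_eq_fixedPt hpos hell).mpr rfl
  have hY_val : (g⁻¹ * X * g).val = l • X.val + m • 1 := by
    rw [Units.val_mul, Units.val_mul, mul_assoc, h, Units.inv_mul_cancel_left]
  have hY_pos : 0 < (g⁻¹ * X * g).val.det := by
    rwa [Units.val_mul, Units.val_mul, det_units_conj']
  have hY : (g⁻¹ * X * g) • τ = τ := by
    rw [UpperHalfPlane.gl_smul_eq_self_iff_quadratic hpos] at hX
    rw [UpperHalfPlane.gl_smul_eq_self_iff_quadratic hY_pos, hY_val]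
    simp only [Matrix.add_apply, Matrix.smul_apply, smul_eq_mul, ne_eq, one_ne_zero, zero_ne_one,
      not_false_eq_true, one_apply_ne, one_apply_eq, mul_zero, add_zero, mul_one,
      add_sub_add_right_eq_sub, Complex.ofReal_mul, Complex.ofReal_add]
    linear_combination (l : ℂ) * hX
  rw [← UpperHalfPlane.gl_smul_eq_self_iff_eq_fixedPt hpos hell, ← mul_smul,
    ← mul_inv_cancel_left g (X * g), mul_smul, ← mul_assoc, hY]

namespace PSL2R

theorem isElementary_of_mul_eq_of_isElliptic {X : Matrix (Fin 2) (Fin 2) ℝ} (hX : X.IsElliptic)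
    {G : Subgroup PSL2R}
    (h : ∀ g : SL2R, QuotientGroup.mk g ∈ G → ∃ l m : ℝ, X * g.val = g.val * (l • X + m • 1)) :
    IsElementary G := by
  have hpos : 0 < X.det := by
    have : X.discr < 0 := hX
    rw [discr_fin_two] at this
    nlinarith [sq_nonneg (trace X)]
  let X' := GeneralLinearGroup.mkOfDetNeZero X hpos.ne'
  refine .inl ⟨UpperHalfPlane.fixedPt X' hX,
    (Set.finite_singleton (UpperHalfPlane.fixedPt X' hX)).subset ?_⟩
  rintro _ ⟨g, hg, rfl⟩
  obtain ⟨l, m, hlm⟩ := h g hg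
  exact smul_fixedPt_eq_of_mul_eq (X := X') (g := g) hpos hX hlm

theorem submodule_boundaryAct_mk (g : SL2R) {v : Fin 2 → ℝ} (hv : v ≠ 0) :
    Projectivization.submodule (boundaryAct g (Projectivization.mk ℝ v hv)) =
      Submodule.span ℝ {g.val *ᵥ v} :=
  Projectivization.submodule_mk _ _

theorem isElementary_of_mul_eq_of_discr_nonneg {X : Matrix (Fin 2) (Fin 2) ℝ}
    (hX : X ∉ Set.range (scalar (Fin 2))) (hdiscr : 0 ≤ X.discr) {G : Subgroup PSL2R}
    (h : ∀ g : SL2R, QuotientGroup.mk g ∈ G → ∃ l m : ℝ, X * g.val = g.val * (l • X + m • 1)) :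
    IsElementary G := by
  obtain ⟨μ, v, hv, hXv⟩ := exists_mulVec_eq_smul_of_discr_nonneg hdiscr
  have hf : toLin' X ∉ Set.range (algebraMap ℝ (Module.End ℝ (Fin 2 → ℝ))) := by
    rintro ⟨c, hc⟩
    exact hX ⟨c, toLin'.injective ((toLinAlgEquiv'.commutes c).trans hc)⟩
  refine .inr ⟨Projectivization.mk ℝ v hv,
    (finite_setOf_submodule_le_eigenspace (by simp) hf).subset ?_⟩
  rintro _ ⟨g, hg, rfl⟩
  obtain ⟨l, m, hlm⟩ := h g hg
  refine ⟨l * μ + m, ?_⟩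
  rw [submodule_boundaryAct_mk, Submodule.span_singleton_le_iff_mem,
    Module.End.mem_eigenspace_iff, toLin'_apply]
  calc X *ᵥ (g.val *ᵥ v) = g.val *ᵥ ((l • X + m • 1) *ᵥ v) := by
        rw [mulVec_mulVec, hlm, mulVec_mulVec]
    _ = (l * μ + m) • g.val *ᵥ v := by
        rw [add_mulVec, smul_mulVec, hXv, smul_mulVec, one_mulVec, smul_smul, ← add_smul,
          mulVec_smul]

/-- `G` normalizes the algebra `ℝ[X]`, hence permutes the one or two fixed points of `X` in
`ℍ² ∪ ∂ℍ²`. -/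
theorem isElementary_of_mul_eq {X : Matrix (Fin 2) (Fin 2) ℝ}
    (hX : X ∉ Set.range (scalar (Fin 2))) {G : Subgroup PSL2R}
    (h : ∀ g : SL2R, QuotientGroup.mk g ∈ G → ∃ l m : ℝ, X * g.val = g.val * (l • X + m • 1)) :
    IsElementary G :=
  (lt_or_ge X.discr 0).elim (isElementary_of_mul_eq_of_isElliptic · h)
    (isElementary_of_mul_eq_of_discr_nonneg hX · h)

end PSL2R

namespace PSL2R

theorem isElementary_of_commute {G : Subgroup PSL2R} (hG : ∀ x ∈ G, ∀ y ∈ G, x * y = y * x) :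
    IsElementary G := by
  by_cases h : ∃ A : SL2R, QuotientGroup.mk A ∈ G ∧ A.val ∉ Set.range (scalar (Fin 2))
  · obtain ⟨A, hA, hA_nonscalar⟩ := h
    refine isElementary_of_mul_eq hA_nonscalar fun g hg => ?_
    have hcomm : (QuotientGroup.mk (g * A) : PSL2R) = QuotientGroup.mk (A * g) := hG _ hg _ hA
    rcases mk_eq_mk_iff.mp hcomm with h | h <;> replace h := congrArg Subtype.val h
    · exact ⟨1, 0, by simpa using h⟩
    · exact ⟨-1, 0, by simpa using h⟩
  · push Not at h
    have hX : !![0, 1; 0, 0] ∉ Set.range (scalar (Fin 2) : ℝ →+* _) := by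
      rintro ⟨c, hc⟩
      simpa using congrFun₂ hc 0 1
    refine isElementary_of_mul_eq hX fun g hg => ⟨1, 0, ?_⟩
    obtain ⟨c, hc⟩ := h g hg
    rw [← hc, one_smul, zero_smul, add_zero]
    exact (scalar_commute c (Commute.all c) _).symm

theorem traceSMul_one : traceSMul 1 = (2 : ℝ) • 1 := by
  simpa using traceSMul_mk 1

theorem traceSMul_conj_mul (A : SL2R) (y : PSL2R) :
    traceSMul (QuotientGroup.mk A * y * (QuotientGroup.mk A)⁻¹) * A.val = A.val * traceSMul y := by
  obtain ⟨B, rfl⟩ := QuotientGroup.mk_surjective y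
  have htrace : trace (A * B * A⁻¹).val = trace B.val := by
    rw [Matrix.SpecialLinearGroup.coe_mul, trace_mul_comm, ← Matrix.SpecialLinearGroup.coe_mul,
      inv_mul_cancel_left]
  rw [← QuotientGroup.mk_inv, ← QuotientGroup.mk_mul, ← QuotientGroup.mk_mul, traceSMul_mk,
    traceSMul_mk, htrace, smul_mul_assoc, mul_smul_comm, ← Matrix.SpecialLinearGroup.coe_mul,
    inv_mul_cancel_right, Matrix.SpecialLinearGroup.coe_mul]

theorem mul_self_eq_one_of_traceSMul_mem_range_scalar {x : PSL2R}
    (hx : traceSMul x ∈ Set.range (scalar (Fin 2))) : x * x = 1 := by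
  obtain ⟨A, rfl⟩ := QuotientGroup.mk_surjective x
  rw [traceSMul_mk] at hx
  obtain ⟨c, hc⟩ := hx
  have hsq : (A * A).val = scalar (Fin 2) (c - 1) := by
    have hA := aeval_self_charpoly A.val
    simp only [charpoly_fin_two, Matrix.SpecialLinearGroup.det_coe, map_add, map_sub, map_mul,
      map_pow, map_one, Polynomial.aeval_X, Polynomial.aeval_C, ← Algebra.smul_def, ← hc] at hA
    rw [Matrix.SpecialLinearGroup.coe_mul, map_sub, map_one, ← sub_eq_zero, ← hA]
    noncomm_ring
  refine (QuotientGroup.eq_one_iff (A * A)).mpr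
    (Subgroup.mem_center_iff.mpr fun B => Subtype.ext ?_)
  rw [Matrix.SpecialLinearGroup.coe_mul B, Matrix.SpecialLinearGroup.coe_mul (A * A), hsq]
  exact (scalar_commute _ (Commute.all _) B.val).eq.symm

theorem isElementary_of_mul_self_eq_one {G : Subgroup PSL2R} (hG : ∀ x ∈ G, x * x = 1) :
    IsElementary G := by
  have horder (x : G) : orderOf x ∣ 2 :=
    orderOf_dvd_of_pow_eq_one (Subtype.ext (by simpa [pow_two] using hG x x.2))
  exact isElementary_of_commute fun x hx y hy =>
    congrArg Subtype.val (Commute.of_orderOf_dvd_two horder ⟨x, hx⟩ ⟨y, hy⟩).eq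

end PSL2R

/-! ### The span of the matrices `tr(A) A` -/

section Span

open Module

variable {K V : Type*} [Field K] [AddCommGroup V] [Module K V]

theorem span_pair_eq_of_finrank_eq_two {P : Submodule K V} (hP : finrank K P = 2) {x y : V}
    (hx : x ∈ P) (hx0 : x ≠ 0) (hy : y ∈ P) (hxy : ∀ a : K, a • x ≠ y) :
    Submodule.span K {x, y} = P := by
  have : FiniteDimensional K P := .of_finrank_pos (by lia)
  have hcard := finrank_span_eq_card ((LinearIndependent.pair_iff' hx0).mpr hxy)
  rw [range_cons_cons_empty, Fintype.card_fin] at hcard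
  exact Submodule.eq_of_le_of_finrank_eq (Submodule.span_le.mpr (Set.pair_subset hx hy))
    (hcard.trans hP.symm)

end Span

theorem exists_line_trace_mul_eq_zero {n K : Type*} [Fintype n] [Field K]
    {P : Submodule K (Matrix n n K)}
    (hP : Module.finrank K P + 1 = Module.finrank K (Matrix n n K)) :
    ∃ X ≠ 0, (∀ Z ∈ P, trace (Z * X) = 0) ∧
      ∀ W, (∀ Z ∈ P, trace (Z * W) = 0) → ∃ l : K, l • X = W := by
  have hfin := LinearMap.BilinForm.finrank_orthogonal
    (nondegenerate_trace_mul (n := n) (R := K)) P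
  obtain ⟨⟨X, hX⟩, hX0, hspan⟩ := finrank_eq_one_iff'.mp (hfin.trans (by lia))
  refine ⟨X, fun h => hX0 (Subtype.ext h), hX, fun W hW => ?_⟩
  obtain ⟨l, hl⟩ := hspan ⟨W, hW⟩
  exact ⟨l, congrArg Subtype.val hl⟩

theorem mul_inv_conj_eq {n R : Type*} [Fintype n] [DecidableEq n] [CommRing R]
    (g : Matrix.SpecialLinearGroup n R) (X : Matrix n n R) :
    g.val * (g⁻¹.val * X * g.val) = X * g.val := by
  rw [mul_assoc, ← mul_assoc, ← Matrix.SpecialLinearGroup.coe_mul, mul_inv_cancel,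
    Matrix.SpecialLinearGroup.coe_one, one_mul]

namespace PSL2R

/-- The linear span of the matrices `tr(A) A`, for `A` representing an element of `G`. It is stable
under conjugation by `G`, which makes it all of `M₂(ℝ)` when `G` is non-elementary. -/
def traceSpan (G : Subgroup PSL2R) : Submodule ℝ (Matrix (Fin 2) (Fin 2) ℝ) :=
  Submodule.span ℝ (traceSMul '' G)

variable {G : Subgroup PSL2R}

theorem one_mem_traceSpan : 1 ∈ traceSpan G := by
  have htwo : (2 : ℝ) • 1 ∈ traceSpan G :=
    traceSMul_one ▸ Submodule.subset_span (Set.mem_image_of_mem _ G.one_mem)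
  simpa using (traceSpan G).smul_mem 2⁻¹ htwo

theorem conj_mem_traceSpan {g : SL2R} (hg : QuotientGroup.mk g ∈ G) {X : Matrix (Fin 2) (Fin 2) ℝ}
    (hX : X ∈ traceSpan G) : g.val * X * g⁻¹.val ∈ traceSpan G := by
  induction hX using Submodule.span_induction with
  | mem X hX =>
    obtain ⟨x, hx, rfl⟩ := hX
    rw [← traceSMul_conj_mul, mul_assoc, ← Matrix.SpecialLinearGroup.coe_mul, mul_inv_cancel,
      Matrix.SpecialLinearGroup.coe_one, mul_one]
    exact Submodule.subset_span ⟨_, G.mul_mem (G.mul_mem hg hx) (G.inv_mem hg), rfl⟩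
  | zero => simp
  | add X Y _ _ hX hY => simpa [mul_add, add_mul] using add_mem hX hY
  | smul c X _ hX => simpa using (traceSpan G).smul_mem c hX

theorem inv_conj_mem_traceSpan {g : SL2R} (hg : QuotientGroup.mk g ∈ G)
    {X : Matrix (Fin 2) (Fin 2) ℝ} (hX : X ∈ traceSpan G) :
    g⁻¹.val * X * g.val ∈ traceSpan G := by
  simpa using conj_mem_traceSpan (G.inv_mem hg) hX

theorem isElementary_of_traceSpan_le_scalar
    (h : ∀ X ∈ traceSpan G, X ∈ Set.range (scalar (Fin 2))) : IsElementary G :=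
  isElementary_of_mul_self_eq_one fun x hx =>
    mul_self_eq_one_of_traceSMul_mem_range_scalar (h _ (Submodule.subset_span ⟨x, hx, rfl⟩))

theorem isElementary_of_finrank_traceSpan_eq_one (h : Module.finrank ℝ (traceSpan G) = 1) :
    IsElementary G := by
  refine isElementary_of_traceSpan_le_scalar fun X hX => ?_
  have hone : (⟨1, one_mem_traceSpan⟩ : traceSpan G) ≠ 0 := fun h =>
    one_ne_zero (congrArg Subtype.val h)
  obtain ⟨c, hc⟩ := exists_smul_eq_of_finrank_eq_one h hone ⟨X, hX⟩
  exact ⟨c, by rw [scalar_apply, ← smul_one_eq_diagonal]; exact congrArg Subtype.val hc⟩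

theorem isElementary_of_finrank_traceSpan_eq_two (h : Module.finrank ℝ (traceSpan G) = 2) :
    IsElementary G := by
  by_cases hscalar : ∀ X ∈ traceSpan G, X ∈ Set.range (scalar (Fin 2))
  · exact isElementary_of_traceSpan_le_scalar hscalar
  push Not at hscalar
  obtain ⟨X, hX, hX_nonscalar⟩ := hscalar
  have hspan := span_pair_eq_of_finrank_eq_two h one_mem_traceSpan one_ne_zero hX fun a ha =>
    hX_nonscalar ⟨a, by rw [← ha, scalar_apply, smul_one_eq_diagonal]⟩
  refine isElementary_of_mul_eq hX_nonscalar fun g hg => ?_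
  have hconj := inv_conj_mem_traceSpan hg hX
  rw [← hspan] at hconj
  obtain ⟨m, l, hml⟩ := Submodule.mem_span_pair.mp hconj
  exact ⟨l, m, by rw [add_comm, hml, mul_inv_conj_eq]⟩

theorem isElementary_of_finrank_traceSpan_eq_three (h : Module.finrank ℝ (traceSpan G) = 3) :
    IsElementary G := by
  obtain ⟨X, hX0, hX, hline⟩ := exists_line_trace_mul_eq_zero (P := traceSpan G)
    (by rw [h, Module.finrank_matrix, Fintype.card_fin, Module.finrank_self])
  have hX_nonscalar : X ∉ Set.range (scalar (Fin 2)) := by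
    rintro ⟨c, rfl⟩
    have htrace := hX 1 one_mem_traceSpan
    rw [one_mul, scalar_apply, trace_diagonal, Finset.sum_const, Finset.card_univ,
      Fintype.card_fin, two_smul, add_self_eq_zero] at htrace
    exact hX0 (by rw [htrace, map_zero])
  refine isElementary_of_mul_eq hX_nonscalar fun g hg => ?_
  obtain ⟨l, hl⟩ := hline (g⁻¹.val * X * g.val) fun Z hZ => by
    rw [← hX _ (conj_mem_traceSpan hg hZ), ← mul_assoc, ← mul_assoc, trace_mul_comm]
    simp only [mul_assoc]
  exact ⟨l, 0, by rw [zero_smul, add_zero, hl, mul_inv_conj_eq]⟩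

theorem traceSpan_eq_top (hG : ¬ IsElementary G) : traceSpan G = ⊤ := by
  by_contra htop
  have hlt := Submodule.finrank_lt htop
  rw [Module.finrank_matrix, Fintype.card_fin, Module.finrank_self] at hlt
  have hpos : 0 < Module.finrank ℝ (traceSpan G) :=
    Module.finrank_pos_iff_exists_ne_zero.mpr
      ⟨⟨1, one_mem_traceSpan⟩, fun h => one_ne_zero (congrArg Subtype.val h)⟩
  obtain h | h | h : Module.finrank ℝ (traceSpan G) = 1 ∨ Module.finrank ℝ (traceSpan G) = 2 ∨
      Module.finrank ℝ (traceSpan G) = 3 := by lia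
  · exact hG (isElementary_of_finrank_traceSpan_eq_one h)
  · exact hG (isElementary_of_finrank_traceSpan_eq_two h)
  · exact hG (isElementary_of_finrank_traceSpan_eq_three h)

end PSL2R

/-! ### Conjugacy -/

section Schur

theorem commute_of_forall_commute_of_span_eq_top {ι R A : Type*} [CommSemiring R] [Semiring A]
    [Algebra R A] {u : ι → A} (hu : Submodule.span R (Set.range u) = ⊤) {a : A}
    (ha : ∀ i, Commute a (u i)) (x : A) : Commute a x :=
  LinearMap.congr_fun (LinearMap.ext_on_range (f := LinearMap.mulLeft R a)
    (g := LinearMap.mulRight R a) hu fun i => (ha i).eq) x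

theorem exists_eq_smul_of_mul_eq_mul {ι n R : Type*} [Fintype n] [DecidableEq n] [CommRing R]
    {u v : ι → Matrix n n R} (hu : Submodule.span R (Set.range u) = ⊤) {g : GL n R}
    (hg : ∀ i, g.val * u i = v i * g.val) {h : Matrix n n R} (hh : ∀ i, h * u i = v i * h) :
    ∃ c : R, h = c • g.val := by
  have hcomm (i) : Commute (g⁻¹.val * h) (u i) := by
    rw [commute_iff_eq, mul_assoc, hh, Units.inv_mul_eq_iff_eq_mul, ← mul_assoc, ← mul_assoc, hg,
      mul_assoc (v i), Units.mul_inv, mul_one]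
  obtain ⟨c, hc⟩ := mem_range_scalar_of_commute_single (M := g⁻¹.val * h) fun i j _ =>
    (commute_of_forall_commute_of_span_eq_top hu hcomm _).symm
  refine ⟨c, ?_⟩
  rw [eq_comm, Units.inv_mul_eq_iff_eq_mul] at hc
  rw [hc, scalar_apply, ← smul_one_eq_diagonal, mul_smul_comm, mul_one]

end Schur

namespace PSL2R

variable {Γ : Type*} [Group Γ] {ρ₁ ρ₂ : Γ →* PSL2R}

theorem trace_traceSMul_mul_eq (h_tr : ∀ γ, absTrace (ρ₁ γ) = absTrace (ρ₂ γ)) (a b : Γ) :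
    trace (traceSMul (ρ₁ a) * traceSMul (ρ₁ b)) = trace (traceSMul (ρ₂ a) * traceSMul (ρ₂ b)) := by
  refine mul_left_cancel₀ two_ne_zero ?_
  simp only [two_mul_trace_traceSMul_mul, ← map_mul, ← map_inv, h_tr]

theorem trace_traceSMul_mul_mul_eq (h_tr : ∀ γ, absTrace (ρ₁ γ) = absTrace (ρ₂ γ)) (a b c : Γ) :
    trace (traceSMul (ρ₁ a) * traceSMul (ρ₁ b) * traceSMul (ρ₁ c)) =
      trace (traceSMul (ρ₂ a) * traceSMul (ρ₂ b) * traceSMul (ρ₂ c)) := by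
  refine mul_left_cancel₀ four_ne_zero ?_
  simp only [four_mul_trace_traceSMul_mul_mul, trace_traceSMul_mul_eq h_tr, ← map_mul, ← map_inv,
    h_tr]

theorem exists_mk_eq_conj_eq {g : GL (Fin 2) ℝ} {A B : SL2R} {c : ℝ}
    (h : g.val * A.val = c • (B.val * g.val)) :
    ∃ C : SL2R, (QuotientGroup.mk C : PSL2R) = QuotientGroup.mk B ∧
      g.val * A.val * g⁻¹.val = C.val := by
  have hconj : g.val * A.val * g⁻¹.val = c • B.val := by
    rw [h, smul_mul_assoc, mul_assoc, Units.mul_inv, mul_one]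
  have hc : 1 = c ^ 2 := by
    simpa only [det_units_conj, det_smul, Fintype.card_fin, Matrix.SpecialLinearGroup.det_coe,
      mul_one] using congrArg det hconj
  rcases sq_eq_one_iff.mp hc.symm with rfl | rfl
  · exact ⟨B, rfl, by rw [hconj, one_smul]⟩
  · exact ⟨-B, (mk_eq_mk_iff.mpr (.inr rfl)).symm,
      by rw [hconj, neg_one_smul, Matrix.SpecialLinearGroup.coe_neg]⟩

theorem exists_mul_eq_smul_mul {g : GL (Fin 2) ℝ}
    (hu : Submodule.span ℝ (Set.range fun γ => traceSMul (ρ₁ γ)) = ⊤)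
    (hg : ∀ γ, g.val * traceSMul (ρ₁ γ) = traceSMul (ρ₂ γ) * g.val) {γ : Γ} {A B : SL2R}
    (hA : QuotientGroup.mk A = ρ₁ γ) (hB : QuotientGroup.mk B = ρ₂ γ) :
    ∃ c : ℝ, g.val * A.val = c • (B.val * g.val) := by
  let v (δ : Γ) := traceSMul (ρ₂ (γ * δ * γ⁻¹))
  have hA' (δ : Γ) : traceSMul (ρ₁ (γ * δ * γ⁻¹)) * A.val = A.val * traceSMul (ρ₁ δ) := by
    rw [← traceSMul_conj_mul, hA, map_mul, map_mul, map_inv]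
  have hB' (δ : Γ) : v δ * B.val = B.val * traceSMul (ρ₂ δ) := by
    rw [← traceSMul_conj_mul, hB, ← map_inv, ← map_mul, ← map_mul]
  have hgA (δ : Γ) : g.val * A.val * traceSMul (ρ₁ δ) = v δ * (g.val * A.val) := by
    rw [mul_assoc, ← hA', ← mul_assoc, hg, mul_assoc]
  have hBg (δ : Γ) : B.val * g.val * traceSMul (ρ₁ δ) = v δ * (B.val * g.val) := by
    rw [mul_assoc, hg, ← mul_assoc, ← hB', mul_assoc]
  exact exists_eq_smul_of_mul_eq_mul hu (g := B.toGL * g) hBg hgA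

end PSL2R

/-- If `ρ₁(Γ)` is non elementary and `|tr(ρ₁(γ))| = |tr(ρ₂(γ))|` for every `γ`, then `ρ₁` and
`ρ₂` are conjugate by an element of `PGL(2,ℝ)`, i.e. there is `g ∈ GL(2,ℝ)` such that for each
`γ`, conjugating any representative matrix of `ρ₁(γ)` by `g` gives, up to sign and up to a
positive scalar, a representative matrix of `ρ₂(γ)`. (The sign freedom is included in the
choice of the representative `B` of `ρ₂(γ)`, since `-B` represents the same class.) -/
theorem conj_by_PGL_of_absTrace_eq {Γ : Type*} [Group Γ] (ρ₁ ρ₂ : Γ →* PSL2R)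
    (h_nonelem : ¬ IsElementary ρ₁.range)
    (h_tr : ∀ γ : Γ, absTrace (ρ₁ γ) = absTrace (ρ₂ γ)) :
    ∃ g : GL (Fin 2) ℝ, ∀ γ : Γ, ∀ A : SL2R, (QuotientGroup.mk A : PSL2R) = ρ₁ γ →
      ∃ (B : SL2R) (c : ℝ), 0 < c ∧ (QuotientGroup.mk B : PSL2R) = ρ₂ γ ∧
        (g : Matrix (Fin 2) (Fin 2) ℝ) * (A : Matrix (Fin 2) (Fin 2) ℝ) *
          ((g⁻¹ : GL (Fin 2) ℝ) : Matrix (Fin 2) (Fin 2) ℝ) =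
          c • (B : Matrix (Fin 2) (Fin 2) ℝ) := by
  have hu : Submodule.span ℝ (Set.range fun γ => PSL2R.traceSMul (ρ₁ γ)) = ⊤ := by
    rw [← PSL2R.traceSpan_eq_top h_nonelem, PSL2R.traceSpan, MonoidHom.coe_range, ← Set.range_comp]
    rfl
  obtain ⟨g, hg⟩ := exists_GL_mul_eq_mul_of_trace_eq hu (PSL2R.trace_traceSMul_mul_eq h_tr)
    (PSL2R.trace_traceSMul_mul_mul_eq h_tr)
  refine ⟨g, fun γ A hA => ?_⟩
  obtain ⟨B, hB⟩ := QuotientGroup.mk_surjective (ρ₂ γ)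
  obtain ⟨c, hc⟩ := PSL2R.exists_mul_eq_smul_mul hu hg hA hB
  obtain ⟨C, hCB, hC⟩ := PSL2R.exists_mk_eq_conj_eq hc
  exact ⟨C, 1, one_pos, hCB.trans hB, by rw [one_smul, hC]⟩
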